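/- arXiv:1601.05029 — 4 statements merged into one kernel-verified Lean document; each statement's English description precedes it below -/
import Mathlib

section
/- Let α and β be positive integers with gcd(α,β)=1, let δ be a positive integer, let ℓ be an integer with 0 ≤ ℓ < δ, let μ be a real number, and set η = exp(−2πiℓ/(βδ)). Then a pair (z₁,z₂) of nonzero complex numbers satisfies both z₁ + z₁⁻¹ + z₂ + z₂⁻¹ = 4cos μ and z₁^α z₂^β = exp(2πiℓ/δ) if and only if there exists a nonzero complex number z such that z^β + z^{−β} + η z^α + η⁻¹ z^{−α} = 4cos μ, z₁ = z^β, and z₂ = η⁻¹ z^{−α}. -/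
open Complex

/-!
Since `η⁻¹ ^ β = χ(ℓ/δ)`, the wrapping condition says `z₁ ^ α = (η⁻¹ / z₂) ^ β`. As `α` and `β` are
coprime, this means that `z₁` and `η⁻¹ / z₂` are the powers `z ^ β` and `z ^ α` of a common `z`;
substituting these into the dispersion relation gives the equation for `z`.
-/

section CommGroupWithZero

variable {G₀ : Type*} [CommGroupWithZero G₀] {m n : ℕ} {x y c : G₀}

theorem pow_eq_pow_iff_exists_ne_zero_of_coprime (hmn : m.Coprime n) (hx : x ≠ 0) (hy : y ≠ 0) :
    x ^ m = y ^ n ↔ ∃ z ≠ 0, x = z ^ n ∧ y = z ^ m := by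
  rw [pow_eq_pow_iff_of_coprime hmn]
  refine exists_congr fun z ↦ (and_iff_right_of_imp ?_).symm
  rintro ⟨rfl, rfl⟩ rfl
  have hn : n = 0 := by_contra fun hn ↦ hx (zero_pow hn)
  have hm : m = 0 := by_contra fun hm ↦ hy (zero_pow hm)
  simp only [hm, hn, Nat.coprime_zero_left, zero_ne_one] at hmn

theorem pow_mul_pow_eq_pow_iff_exists_of_coprime (hmn : m.Coprime n)
    (hx : x ≠ 0) (hy : y ≠ 0) (hc : c ≠ 0) :
    x ^ m * y ^ n = c ^ n ↔ ∃ z ≠ 0, x = z ^ n ∧ y = c * (z ^ m)⁻¹ := by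
  calc
    x ^ m * y ^ n = c ^ n ↔ x ^ m = (c / y) ^ n := by
      rw [div_pow, eq_div_iff (pow_ne_zero n hy)]
    _ ↔ ∃ z ≠ 0, x = z ^ n ∧ c / y = z ^ m :=
      pow_eq_pow_iff_exists_ne_zero_of_coprime hmn hx (div_ne_zero hc hy)
    _ ↔ ∃ z ≠ 0, x = z ^ n ∧ y = c * (z ^ m)⁻¹ := by
      refine exists_congr fun z ↦ and_congr_right fun hz ↦ and_congr_right fun _ ↦ ?_
      rw [div_eq_iff hy, ← div_eq_mul_inv, eq_div_iff (pow_ne_zero m hz), mul_comm y, eq_comm]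

end CommGroupWithZero

theorem tube_system_iff_parametrization_general {K : Type*} [Semifield K] {α β : ℕ}
    (hαβ : α.Coprime β) {η z₁ z₂ : K} (hη : η ≠ 0) (hz₁ : z₁ ≠ 0) (hz₂ : z₂ ≠ 0) (c : K) :
    (z₁ + z₁⁻¹ + z₂ + z₂⁻¹ = c ∧ z₁ ^ α * z₂ ^ β = η⁻¹ ^ β) ↔
      ∃ z ≠ 0, z ^ β + (z ^ β)⁻¹ + η * z ^ α + η⁻¹ * (z ^ α)⁻¹ = c ∧
        z₁ = z ^ β ∧ z₂ = η⁻¹ * (z ^ α)⁻¹ := by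
  have dispersion (z : K) :
      z ^ β + (z ^ β)⁻¹ + η⁻¹ * (z ^ α)⁻¹ + (η⁻¹ * (z ^ α)⁻¹)⁻¹ =
        z ^ β + (z ^ β)⁻¹ + η * z ^ α + η⁻¹ * (z ^ α)⁻¹ := by
    rw [mul_inv, inv_inv, inv_inv, add_right_comm]
  rw [pow_mul_pow_eq_pow_iff_exists_of_coprime hαβ hz₁ hz₂ (inv_ne_zero hη), ← exists_and_left]
  refine exists_congr fun z ↦ ?_
  rw [and_left_comm]
  refine and_congr_right fun _ ↦ and_congr_left ?_
  rintro ⟨rfl, rfl⟩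
  rw [dispersion]

theorem inv_exp_neg_div_natCast_mul_pow {n : ℕ} (hn : n ≠ 0) (x y : ℂ) :
    (exp (-x / (n * y)))⁻¹ ^ n = exp (x / y) := by
  rw [← exp_neg, ← exp_nat_mul, neg_div, neg_neg, ← mul_div_assoc,
    mul_div_mul_left _ _ (Nat.cast_ne_zero.mpr hn)]

/-- Equivalence of the tube system (dispersion relation and wrapping
condition with phase `χ(ℓ/δ)`) with its one-variable parametrization by `z`. -/
theorem tube_system_iff_parametrization
    (α β δ : ℕ) (hα : 0 < α) (hβ : 0 < β) (hδ : 0 < δ)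
    (hgcd : Nat.gcd α β = 1)
    (ℓ : ℤ) (hℓ0 : 0 ≤ ℓ) (hℓδ : ℓ < (δ : ℤ)) (μ : ℝ)
    (η : ℂ) (hη : η = Complex.exp (-(2 * Real.pi * Complex.I * ℓ) / (β * δ)))
    (z₁ z₂ : ℂ) (hz₁ : z₁ ≠ 0) (hz₂ : z₂ ≠ 0) :
    (z₁ + z₁⁻¹ + z₂ + z₂⁻¹ = 4 * Real.cos μ ∧
      z₁ ^ α * z₂ ^ β = Complex.exp (2 * Real.pi * Complex.I * ℓ / δ))
    ↔
    (∃ z : ℂ, z ≠ 0 ∧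
      z ^ (β : ℤ) + z ^ (-(β : ℤ)) + η * z ^ (α : ℤ) + η⁻¹ * z ^ (-(α : ℤ))
        = 4 * Real.cos μ ∧
      z₁ = z ^ (β : ℤ) ∧ z₂ = η⁻¹ * z ^ (-(α : ℤ))) := by
  rw [← inv_exp_neg_div_natCast_mul_pow hβ.ne', ← hη]
  simpa only [zpow_neg, zpow_natCast] using tube_system_iff_parametrization_general hgcd
    (hη ▸ exp_ne_zero _) hz₁ hz₂ (4 * Real.cos μ : ℂ)
end

section
/- Let α and β be positive integers with gcd(α,β)=1, let δ be a positive integer, and let μ be a real number. For each integer ℓ with 0 ≤ ℓ < δ, set η_ℓ = exp(−2πiℓ/(βδ)) and define Z_ℓ = { (z^β, η_ℓ⁻¹ z^{−α}) : z a nonzero complex number with z^β + z^{−β} + η_ℓ z^α + η_ℓ⁻¹ z^{−α} = 4cos μ }. Then the set of pairs (z₁,z₂) of nonzero complex numbers satisfying z₁^{αδ} z₂^{βδ} = 1 and z₁ + z₁⁻¹ + z₂ + z₂⁻¹ = 4cos μ is equal to the union of Z₀, Z₁, …, Z_{δ−1}, and this union is disjoint (Z_ℓ ∩ Z_k = ∅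 for 0 ≤ ℓ < k < δ). -/
open Complex

/-- The set `Z_ℓ` of pairs `(z^β, η_ℓ⁻¹ z^{−α})` with `z` ranging over nonzero
solutions of the one-variable dispersion equation, `η_ℓ = exp(−2πiℓ/(βδ))`. -/
noncomputable def Zset (α β δ : ℕ) (μ : ℝ) (ℓ : ℕ) : Set (ℂ × ℂ) :=
  { p : ℂ × ℂ | ∃ z : ℂ, z ≠ 0 ∧
      z ^ (β : ℤ) + z ^ (-(β : ℤ))
        + Complex.exp (-(2 * Real.pi * Complex.I * ℓ) / (β * δ)) * z ^ (α : ℤ)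
        + (Complex.exp (-(2 * Real.pi * Complex.I * ℓ) / (β * δ)))⁻¹ * z ^ (-(α : ℤ))
        = 4 * Real.cos μ ∧
      p = (z ^ (β : ℤ),
           (Complex.exp (-(2 * Real.pi * Complex.I * ℓ) / (β * δ)))⁻¹ * z ^ (-(α : ℤ))) }

/-!
The wrapping condition says that `x ^ α * y ^ β` is a `δ`-th root of unity, hence equal to
`η_ℓ ^ (-β)` for exactly one `ℓ < δ`. Replacing `y` by `η_ℓ * y` reduces to `x ^ α * y ^ β = 1`, and
since `α` and `β` are coprime the nonzero solutions of this equation are the pairs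
`(z ^ β, z ^ (-α))`. So the value of `x ^ α * y ^ β` tells which `Z_ℓ` contains `(x, y)`.
-/

theorem pow_mul_pow_eq_one_iff_of_coprime {G : Type*} [CommGroupWithZero G] {m n : ℕ}
    (hmn : m.Coprime n) {a b : G} (ha : a ≠ 0) (hb : b ≠ 0) :
    a ^ m * b ^ n = 1 ↔ ∃ c, c ≠ 0 ∧ a = c ^ n ∧ b = (c ^ m)⁻¹ := by
  rw [mul_eq_one_iff_eq_inv₀ (pow_ne_zero n hb), ← inv_pow, pow_eq_pow_iff_of_coprime hmn]
  simp only [inv_eq_iff_eq_inv]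
  refine exists_congr fun c ↦ ⟨fun h ↦ ⟨?_, h⟩, And.right⟩
  rintro rfl
  have hn : n = 0 := by simpa [h.1] using ha
  have hm : m = 0 := by simpa [h.2] using hb
  simp [hm, hn] at hmn

theorem pow_eq_one_iff_exists_lt_pow_eq {R : Type*} [CommRing R] [IsDomain R] {n : ℕ} [NeZero n]
    {ω w : R} (hω : IsPrimitiveRoot ω n) : w ^ n = 1 ↔ ∃ i < n, ω ^ i = w := by
  refine ⟨hω.eq_pow_of_pow_eq_one, ?_⟩
  rintro ⟨i, -, rfl⟩
  rw [pow_right_comm, hω.pow_eq_one, one_pow]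

section DispersionCurve

variable {K : Type*} [Field K] {α β δ : ℕ} {η ζ E : K} {p : K × K}

/-- The curve of pairs `(z ^ β, η⁻¹ * z ^ (-α))`, with `z` nonzero, that satisfy the dispersion
relation of the square lattice. The factor `η` is the twist of the curve, and `E` is the right-hand
side of the relation, `4 cos μ` for the quantum graph. -/
def dispersionCurve (α β : ℕ) (η E : K) : Set (K × K) :=
  {p | ∃ z : K, z ≠ 0 ∧
    z ^ β + (z ^ β)⁻¹ + η * z ^ α + η⁻¹ * (z ^ α)⁻¹ = E ∧ p = (z ^ β, η⁻¹ * (z ^ α)⁻¹)}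

theorem mem_dispersionCurve (hη : η ≠ 0) :
    p ∈ dispersionCurve α β η E ↔
      (∃ z : K, z ≠ 0 ∧ p.1 = z ^ β ∧ η * p.2 = (z ^ α)⁻¹) ∧
        p.1 + p.1⁻¹ + p.2 + p.2⁻¹ = E := by
  have relation_eq (z : K) : z ^ β + (z ^ β)⁻¹ + η * z ^ α + η⁻¹ * (z ^ α)⁻¹ =
      z ^ β + (z ^ β)⁻¹ + η⁻¹ * (z ^ α)⁻¹ + (η⁻¹ * (z ^ α)⁻¹)⁻¹ := by
    rw [mul_inv, inv_inv, inv_inv, add_right_comm]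
  constructor
  · rintro ⟨z, hz, hE, rfl⟩
    exact ⟨⟨z, hz, rfl, mul_inv_cancel_left₀ hη _⟩, (relation_eq z).symm.trans hE⟩
  · rintro ⟨⟨z, hz, hp₁, hp₂⟩, hE⟩
    rw [← eq_inv_mul_iff_mul_eq₀ hη] at hp₂
    exact ⟨z, hz, by rw [relation_eq, ← hp₁, ← hp₂, hE], Prod.ext hp₁ hp₂⟩

theorem mem_dispersionCurve_iff_of_coprime (hαβ : α.Coprime β) (hη : η ≠ 0) :
    p ∈ dispersionCurve α β η E ↔ p.1 ≠ 0 ∧ p.2 ≠ 0 ∧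
      p.1 ^ α * p.2 ^ β = (η ^ β)⁻¹ ∧ p.1 + p.1⁻¹ + p.2 + p.2⁻¹ = E := by
  have untwist : p.1 ^ α * (η * p.2) ^ β = 1 ↔ p.1 ^ α * p.2 ^ β = (η ^ β)⁻¹ := by
    rw [mul_pow, mul_left_comm, mul_comm, mul_eq_one_iff_eq_inv₀ (pow_ne_zero β hη)]
  rw [mem_dispersionCurve hη, ← and_assoc, ← and_assoc]
  refine and_congr_left fun _ ↦ ⟨?_, ?_⟩
  · rintro ⟨z, hz, hp₁, hp₂⟩
    have hx : p.1 ≠ 0 := hp₁ ▸ pow_ne_zero β hz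
    have hy : η * p.2 ≠ 0 := hp₂ ▸ inv_ne_zero (pow_ne_zero α hz)
    exact ⟨⟨hx, right_ne_zero_of_mul hy⟩,
      untwist.1 ((pow_mul_pow_eq_one_iff_of_coprime hαβ hx hy).2 ⟨z, hz, hp₁, hp₂⟩)⟩
  · rintro ⟨⟨hx, hy⟩, hpow⟩
    exact (pow_mul_pow_eq_one_iff_of_coprime hαβ hx (mul_ne_zero hη hy)).1 (untwist.2 hpow)

theorem solution_set_eq_disjoint_union_general (hβ : β ≠ 0) (hδ : δ ≠ 0)
    (hαβ : α.Coprime β) (hζ : IsPrimitiveRoot (ζ ^ β) δ) :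
    ({p : K × K | p.1 ≠ 0 ∧ p.2 ≠ 0 ∧ p.1 ^ (α * δ) * p.2 ^ (β * δ) = 1 ∧
        p.1 + p.1⁻¹ + p.2 + p.2⁻¹ = E}
      = ⋃ ℓ ∈ Finset.range δ, dispersionCurve α β (ζ ^ ℓ) E) ∧
    ∀ ℓ k : ℕ, ℓ < δ → k < δ → ℓ ≠ k →
      dispersionCurve α β (ζ ^ ℓ) E ∩ dispersionCurve α β (ζ ^ k) E = ∅ := by
  have : NeZero δ := ⟨hδ⟩
  have hζ₀ : ζ ≠ 0 := ne_zero_pow hβ (hζ.ne_zero hδ)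
  have mem_curve (ℓ : ℕ) (p : K × K) : p ∈ dispersionCurve α β (ζ ^ ℓ) E ↔ p.1 ≠ 0 ∧ p.2 ≠ 0 ∧
      (ζ ^ β)⁻¹ ^ ℓ = p.1 ^ α * p.2 ^ β ∧ p.1 + p.1⁻¹ + p.2 + p.2⁻¹ = E := by
    rw [mem_dispersionCurve_iff_of_coprime hαβ (pow_ne_zero ℓ hζ₀), inv_pow, pow_right_comm,
      eq_comm (a := p.1 ^ α * p.2 ^ β)]
  have wrapping_iff (p : K × K) : p.1 ^ (α * δ) * p.2 ^ (β * δ) = 1 ↔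
      ∃ ℓ < δ, (ζ ^ β)⁻¹ ^ ℓ = p.1 ^ α * p.2 ^ β := by
    rw [pow_mul, pow_mul, ← mul_pow, pow_eq_one_iff_exists_lt_pow_eq hζ.inv]
  refine ⟨?_, fun ℓ k hℓ hk hℓk ↦ ?_⟩
  · ext p
    simp only [Set.mem_ofPred_eq, Set.mem_iUnion₂, Finset.mem_range, mem_curve, wrapping_iff]
    tauto
  · refine Set.disjoint_iff_inter_eq_empty.1 (Set.disjoint_left.2 fun p hpℓ hpk ↦ hℓk ?_)
    rw [mem_curve] at hpℓ hpk
    exact hζ.inv.pow_inj hℓ hk (hpℓ.2.2.1.trans hpk.2.2.1.symm)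

end DispersionCurve

theorem Zset_eq_dispersionCurve (α β δ : ℕ) (μ : ℝ) (ℓ : ℕ) :
    Zset α β δ μ ℓ = dispersionCurve α β ((exp (2 * Real.pi * I / (β * δ : ℕ)))⁻¹ ^ ℓ)
      (4 * Real.cos μ) := by
  have phase_eq : exp (-(2 * Real.pi * I * ℓ) / (β * δ)) =
      (exp (2 * Real.pi * I / (β * δ : ℕ)))⁻¹ ^ ℓ := by
    rw [← exp_neg, ← exp_nat_mul]
    push_cast
    ring_nf
  simp only [Zset, dispersionCurve, phase_eq, zpow_neg, zpow_natCast]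

/-- Theorem on z-equations: the solution set of the tube system is the
disjoint union of the sets `Z_ℓ`, `0 ≤ ℓ < δ`. -/
theorem solution_set_eq_disjoint_union
    (α β δ : ℕ) (hα : 0 < α) (hβ : 0 < β) (hδ : 0 < δ)
    (hgcd : Nat.gcd α β = 1) (μ : ℝ) :
    ({ p : ℂ × ℂ | p.1 ≠ 0 ∧ p.2 ≠ 0 ∧
        p.1 ^ (α * δ) * p.2 ^ (β * δ) = 1 ∧
        p.1 + p.1⁻¹ + p.2 + p.2⁻¹ = 4 * Real.cos μ }
      = ⋃ ℓ ∈ Finset.range δ, Zset α β δ μ ℓ) ∧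
    (∀ ℓ k : ℕ, ℓ < δ → k < δ → ℓ ≠ k → Zset α β δ μ ℓ ∩ Zset α β δ μ k = ∅) := by
  simpa only [Zset_eq_dispersionCurve] using
    solution_set_eq_disjoint_union_general hβ.ne' hδ.ne' hgcd
      ((isPrimitiveRoot_exp (β * δ) (mul_pos hβ hδ).ne').inv.pow (mul_pos hβ hδ) rfl)
end

section
/- Let α and β be positive integers with gcd(α,β)=1, and let z₁, z₂, η be nonzero complex numbers with z₁^α z₂^β = η^{−β}. Then there exists a nonzero complex number z such that z₁ = z^β and z₂ = η⁻¹ z^{−α}. -/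
/-!
With `w = (η z₂)⁻¹` the wrapping condition reads `z₁^α = w^β`, and the parametrization asks for `z`
with `z₁ = z^β` and `w = z^α`. For coprime `α`, `β` Bézout's identity `α a + β b = 1` provides
`z = w^a z₁^b`, so no roots have to be extracted and any commutative group with zero will do.
-/

section CommGroupWithZero

variable {G₀ : Type*} [CommGroupWithZero G₀] {α β : ℕ}

lemma mul_pow_eq_zpow_neg_iff {x y η : G₀} (hy : y ≠ 0) :
    x * y ^ β = η ^ (-(β : ℤ)) ↔ x = (η * y)⁻¹ ^ β := by
  rw [← eq_div_iff (pow_ne_zero β hy), zpow_neg, zpow_natCast, inv_pow, mul_pow, mul_inv,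
    div_eq_mul_inv]

lemma exists_ne_zero_of_pow_eq_pow_of_coprime (hαβ : α.Coprime β) {x y : G₀} (hx : x ≠ 0)
    (hy : y ≠ 0) (hxy : x ^ α = y ^ β) : ∃ z : G₀, z ≠ 0 ∧ x = z ^ β ∧ y = z ^ α := by
  obtain ⟨z, rfl, rfl⟩ := (pow_eq_pow_iff_of_coprime hαβ).mp hxy
  refine ⟨z, ?_, rfl, rfl⟩
  rintro rfl
  obtain rfl : β = 0 := not_imp_comm.mp zero_pow hx
  obtain rfl : α = 0 := not_imp_comm.mp zero_pow hy
  exact Nat.not_coprime_zero_zero hαβ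

theorem exists_parametrizing_z_general (hαβ : α.Coprime β) {z₁ z₂ η : G₀}
    (hz₁ : z₁ ≠ 0) (hz₂ : z₂ ≠ 0) (hη : η ≠ 0) (h : z₁ ^ α * z₂ ^ β = η ^ (-(β : ℤ))) :
    ∃ z : G₀, z ≠ 0 ∧ z₁ = z ^ (β : ℤ) ∧ z₂ = η⁻¹ * z ^ (-(α : ℤ)) := by
  have h_pow : z₁ ^ α = (η * z₂)⁻¹ ^ β := (mul_pow_eq_zpow_neg_iff hz₂).mp h
  obtain ⟨z, hz, hzβ, hzα⟩ := exists_ne_zero_of_pow_eq_pow_of_coprime hαβ hz₁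
    (inv_ne_zero (mul_ne_zero hη hz₂)) h_pow
  refine ⟨z, hz, by rw [hzβ, zpow_natCast], ?_⟩
  rw [zpow_neg, zpow_natCast, ← hzα, inv_inv, inv_mul_cancel_left₀ hη]

end CommGroupWithZero

/-- Existence step of the parametrization: if `z₁^α z₂^β = η^{−β}`
with `gcd(α,β) = 1`, then `(z₁, z₂) = (z^β, η⁻¹ z^{−α})` for some nonzero `z`. -/
theorem exists_parametrizing_z
    (α β : ℕ) (hα : 0 < α) (hβ : 0 < β) (hgcd : Nat.gcd α β = 1)
    (z₁ z₂ η : ℂ) (hz₁ : z₁ ≠ 0) (hz₂ : z₂ ≠ 0) (hη : η ≠ 0)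
    (h : z₁ ^ α * z₂ ^ β = η ^ (-(β : ℤ))) :
    ∃ z : ℂ, z ≠ 0 ∧ z₁ = z ^ (β : ℤ) ∧ z₂ = η⁻¹ * z ^ (-(α : ℤ)) :=
  exists_parametrizing_z_general hgcd hz₁ hz₂ hη h
end

section
/- Let k be a real number, set ζ = e^{ik}, and let z₁ and z₂ be nonzero complex numbers. Let M be the 4×4 complex matrix with rows (1, 1, −1, −1), (z₁ − ζ, z₁ − ζ⁻¹, 0, 0), (0, 0, z₂⁻¹ − ζ, z₂⁻¹ − ζ⁻¹), and (1 − ζ z₁⁻¹, 0, 1 − ζ z₂, 0). Then det M = −2i·sin k·(z₁ + z₁⁻¹ + z₂ + z₂⁻¹ − 4cos k). -/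
open Complex Matrix

/-!
The rows of the two edges share the difference `ζ⁻¹ - ζ` of their nonzero entries, so this factor,
which is `-2i sin k`, comes out of the determinant. What remains is a sum with one term
`(1 - ζ w⁻¹)(w - ζ⁻¹) = w + w⁻¹ - (ζ + ζ⁻¹)` per edge, where `w` is the factor gained along the
edge: `z₁` for the horizontal one, `z₂⁻¹` for the vertical one.
-/

theorem det_two_edge_rows {R : Type*} [CommRing R] (a b c d p q : R) :
    !![1, 1, -1, -1;
       a, b, 0, 0;
       0, 0, c, d;
       p, 0, q, 0].det = (a - b) * (q * d) + (c - d) * (p * b) := by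
  set A := !![1, 1, -1, -1; a, b, 0, 0; 0, 0, c, d; p, 0, q, 0]
  have last_row : A 3 = ![p, 0, q, 0] := rfl
  have minor_p : A.submatrix (Fin.succAbove 3) (Fin.succAbove 0) =
      !![1, -1, -1; b, 0, 0; 0, c, d] := by
    ext i j
    fin_cases i <;> fin_cases j <;> rfl
  have minor_q : A.submatrix (Fin.succAbove 3) (Fin.succAbove 2) =
      !![1, 1, -1; a, b, 0; 0, 0, d] := by
    ext i j
    fin_cases i <;> fin_cases j <;> rfl
  calc
    A.det = -(p * !![1, -1, -1; b, 0, 0; 0, c, d].det)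
        - q * !![1, 1, -1; a, b, 0; 0, 0, d].det := by
      rw [det_succ_row A 3, Fin.sum_univ_four, last_row, minor_p, minor_q]
      simp only [cons_val, Fin.coe_ofNat_eq_mod]
      ring
    _ = -(p * (b * (d - c))) - q * ((b - a) * d) := by
      simp only [det_fin_three, of_apply, cons_val', cons_val]
      ring
    _ = (a - b) * (q * d) + (c - d) * (p * b) := by ring

section Field

variable {K : Type*} [Field K]

theorem one_sub_mul_inv_mul_sub_inv {ζ w : K} (hζ : ζ ≠ 0) (hw : w ≠ 0) :
    (1 - ζ * w⁻¹) * (w - ζ⁻¹) = w + w⁻¹ - (ζ + ζ⁻¹) := by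
  field_simp
  ring

/-- The matrix of vertex conditions on the edge waves `uⱼ(x) = aⱼ e^{ikx} + bⱼ e^{-ikx}`, acting
on `(a₁, b₁, a₂, b₂)`, with `ζ` standing for `e^{ik}`. The first three rows are the continuity
conditions `u₁(0) = u₂(0)`, `u₁(1) = z₁ u₁(0)` and `u₂(1) = z₂⁻¹ u₂(0)`. The last row is the
Kirchhoff condition `Du₁(0) + Du₂(0) = z₁⁻¹ Du₁(1) + z₂ Du₂(1)`, where `D = d/dx`, divided by `ik`
(for `k ≠ 0`), added to `z₁⁻¹` times the second row and `z₂` times the third, and then halved; this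
is what clears its `b₁` and `b₂` entries. -/
def vertexConditionMatrix (ζ z₁ z₂ : K) : Matrix (Fin 4) (Fin 4) K :=
  !![1, 1, -1, -1;
     z₁ - ζ, z₁ - ζ⁻¹, 0, 0;
     0, 0, z₂⁻¹ - ζ, z₂⁻¹ - ζ⁻¹;
     1 - ζ * z₁⁻¹, 0, 1 - ζ * z₂, 0]

theorem det_vertexConditionMatrix {ζ z₁ z₂ : K} (hζ : ζ ≠ 0) (hz₁ : z₁ ≠ 0) (hz₂ : z₂ ≠ 0) :
    (vertexConditionMatrix ζ z₁ z₂).det =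
      (ζ⁻¹ - ζ) * (z₁ + z₁⁻¹ + z₂ + z₂⁻¹ - 2 * (ζ + ζ⁻¹)) := by
  have horizontal : (1 - ζ * z₁⁻¹) * (z₁ - ζ⁻¹) = z₁ + z₁⁻¹ - (ζ + ζ⁻¹) :=
    one_sub_mul_inv_mul_sub_inv hζ hz₁
  have vertical : (1 - ζ * z₂) * (z₂⁻¹ - ζ⁻¹) = z₂⁻¹ + z₂ - (ζ + ζ⁻¹) := by
    simpa only [inv_inv] using one_sub_mul_inv_mul_sub_inv hζ (inv_ne_zero hz₂)
  rw [vertexConditionMatrix, det_two_edge_rows, horizontal, vertical]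
  ring

end Field

theorem inv_exp_I_mul_sub_exp_I_mul (k : ℂ) :
    (exp (I * k))⁻¹ - exp (I * k) = -2 * I * sin k := by
  rw [← exp_neg, mul_comm I k, ← neg_mul]
  linear_combination I * two_sin k + (exp (-k * I) - exp (k * I)) * I_mul_I

theorem exp_I_mul_add_inv_exp_I_mul (k : ℂ) :
    exp (I * k) + (exp (I * k))⁻¹ = 2 * cos k := by
  rw [← exp_neg, mul_comm I k, ← neg_mul, two_cos]

theorem det_vertex_condition_matrix_general (k : ℂ) {z₁ z₂ : ℂ} (hz₁ : z₁ ≠ 0) (hz₂ : z₂ ≠ 0) :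
    (vertexConditionMatrix (exp (I * k)) z₁ z₂).det =
      -2 * I * sin k * (z₁ + z₁⁻¹ + z₂ + z₂⁻¹ - 4 * cos k) := by
  rw [det_vertexConditionMatrix (exp_ne_zero _) hz₁ hz₂, inv_exp_I_mul_sub_exp_I_mul,
    exp_I_mul_add_inv_exp_I_mul]
  ring

/-- the determinant of the 4×4 matrix of matching and flux conditions
equals `−2i sin k (z₁ + z₁⁻¹ + z₂ + z₂⁻¹ − 4 cos k)`. -/
theorem det_vertex_condition_matrix
    (k : ℝ) (ζ : ℂ) (hζ : ζ = Complex.exp (Complex.I * k))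
    (z₁ z₂ : ℂ) (hz₁ : z₁ ≠ 0) (hz₂ : z₂ ≠ 0)
    (M : Matrix (Fin 4) (Fin 4) ℂ)
    (hM : M = !![1, 1, -1, -1;
                 z₁ - ζ, z₁ - ζ⁻¹, 0, 0;
                 0, 0, z₂⁻¹ - ζ, z₂⁻¹ - ζ⁻¹;
                 1 - ζ * z₁⁻¹, 0, 1 - ζ * z₂, 0]) :
    M.det = -2 * Complex.I * Real.sin k * (z₁ + z₁⁻¹ + z₂ + z₂⁻¹ - 4 * Real.cos k) := by
  rw [hM, hζ, ofReal_sin, ofReal_cos]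
  exact det_vertex_condition_matrix_general k hz₁ hz₂
end
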